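/- Let θ = (θ_d)_{d ∈ ℕ^n×ℕ} be strictly positive reals with Σ_d θ_d · max(1,γ)^{d_y + 1} < ∞. If for each r ≥ max_j d_j, φ^r is an optimal solution of the problem inf { Σ_{d ∈ ℕ^{n+1}_{2r}} θ_d φ_d : φ feasible at order r }, then lim_{r→∞} Σ_{d ∈ ℕ^{n+1}_{2r}} θ_d φ^r_d = Σ_{d ∈ ℕ^n×ℕ} θ_d μ_d, and lim_{r→∞} φ^r_d = μ_d for every d ∈ ℕ^n × ℕ. -/

import Mathlib

open MeasureTheory Set

noncomputable section

/-- The finite set `ℕ^{n+1}_r` of multi-indices `d ∈ ℕ^n × ℕ` with `|d| ≤ r`. -/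
def idx (n r : ℕ) : Finset ((Fin n → ℕ) × ℕ) :=
  Finset.filter (fun d => (∑ i, d.1 i) + d.2 ≤ r)
    ((Fintype.piFinset fun _ : Fin n => Finset.range (r + 1)) ×ˢ Finset.range (r + 1))

/-- Multi-indices `e ∈ ℕ^n` with `|e| ≤ r`. -/
def xIdx (n r : ℕ) : Finset (Fin n → ℕ) :=
  Finset.filter (fun e => ∑ i, e i ≤ r) (Fintype.piFinset fun _ : Fin n => Finset.range (r + 1))

/-- Evaluation of a polynomial in `x` of degree `≤ r` given by its coefficients `c`. -/
def polyEval (n r : ℕ) (c : (Fin n → ℕ) → ℝ) (x : Fin n → ℝ) : ℝ :=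
  ∑ e ∈ xIdx n r, c e * ∏ i, x i ^ e i

/-- The moment matrix `M_r(φ)`, with rows and columns indexed by `ℕ^{n+1}_r`. -/
def momMat (n r : ℕ) (φ : ((Fin n → ℕ) × ℕ) → ℝ) : Matrix (idx n r) (idx n r) ℝ :=
  fun a b => φ (fun i => a.1.1 i + b.1.1 i, a.1.2 + b.1.2)

/-- The localizing matrix `M_{r−t}(g φ)` of a polynomial `g` in `x` with coefficients `c`
and degree `≤ 2t`. -/
def locMatX (n : ℕ) (c : (Fin n → ℕ) → ℝ) (t r : ℕ) (φ : ((Fin n → ℕ) × ℕ) → ℝ) :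
    Matrix (idx n (r - t)) (idx n (r - t)) ℝ :=
  fun a b => ∑ e ∈ xIdx n (2 * t),
    c e * φ (fun i => e i + a.1.1 i + b.1.1 i, a.1.2 + b.1.2)

/-- The localizing matrix `M_{r−1}(g_{m+1} φ)` of the polynomial `g_{m+1}(x,y) = y(γ−y)`. -/
def locMatY (n : ℕ) (γ : ℝ) (r : ℕ) (φ : ((Fin n → ℕ) × ℕ) → ℝ) :
    Matrix (idx n (r - 1)) (idx n (r - 1)) ℝ :=
  fun a b => γ * φ (fun i => a.1.1 i + b.1.1 i, a.1.2 + b.1.2 + 1)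
    - φ (fun i => a.1.1 i + b.1.1 i, a.1.2 + b.1.2 + 2)

/-- Feasibility of a pseudo-moment sequence `φ` at relaxation order `r`:
`M_r(φ) ⪰ 0`, `M_{r−d_j}(g_j φ) ⪰ 0` for `j = 1,…,m+1`, and `φ_d = μ_d` for all
`d ∈ D = {d : d_y ≤ 1}` with `|d| ≤ 2r`. -/
def Feasible (n m : ℕ) (γ : ℝ) (g : Fin m → (Fin n → ℕ) → ℝ) (t : Fin m → ℕ)
    (μmom : ((Fin n → ℕ) × ℕ) → ℝ) (r : ℕ) (φ : ((Fin n → ℕ) × ℕ) → ℝ) : Prop :=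
  (momMat n r φ).PosSemidef ∧
  (∀ j, (locMatX n (g j) (t j) r φ).PosSemidef) ∧
  (locMatY n γ r φ).PosSemidef ∧
  ∀ d : (Fin n → ℕ) × ℕ, d.2 ≤ 1 → (∑ i, d.1 i) + d.2 ≤ 2 * r → φ d = μmom d

lemma sw_approx {n : ℕ} {X : Set (Fin n → ℝ)} (hX : IsCompact X) (h : (Fin n → ℝ) → ℝ)
    (hc : Continuous h) {ε : ℝ} (hε : 0 < ε) :
    ∃ p : MvPolynomial (Fin n) ℝ, ∀ x ∈ X, |MvPolynomial.eval x p - h x| < ε := by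
  let c : Fin n → C(Fin n → ℝ, ℝ) := fun i => ⟨fun x => x i, continuous_apply i⟩
  let A : Subalgebra ℝ C(Fin n → ℝ, ℝ) := (MvPolynomial.aeval c).range
  have key : ∀ (p : MvPolynomial (Fin n) ℝ) x, (MvPolynomial.aeval c p) x = MvPolynomial.eval x p := by
    intro p x
    induction p using MvPolynomial.induction_on with
    | C a => simp
    | add p q hp hq => simp [hp, hq]
    | mul_X p i hp => simp [hp, c]
  have hA : A.SeparatesPoints := by
    intro x y hxy
    obtain ⟨i, hi⟩ := Function.ne_iff.mp hxy
    refine ⟨_, ⟨MvPolynomial.aeval c (MvPolynomial.X i), ⟨MvPolynomial.X i, rfl⟩, rfl⟩, ?_⟩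
    change (MvPolynomial.aeval c (MvPolynomial.X i)) x ≠ (MvPolynomial.aeval c (MvPolynomial.X i)) y
    rw [key, key]
    simpa using hi
  obtain ⟨_, ⟨p, rfl⟩, hp⟩ := ContinuousMap.exists_mem_subalgebra_near_continuous_of_isCompact_of_separatesPoints
    hA ⟨h, hc⟩ hX hε
  refine ⟨p, fun x hx => ?_⟩
  have := hp x hx
  rw [Real.norm_eq_abs] at this
  erw [key] at this
  exact this

lemma cont_eval {n : ℕ} (p : MvPolynomial (Fin n) ℝ) :
    Continuous (fun x : Fin n → ℝ => MvPolynomial.eval x p) := MvPolynomial.continuous_eval p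

/-- functions with measurable and bounded on X are integrable -/
lemma integ_of_bdd {n : ℕ} {X : Set (Fin n → ℝ)} 
    (lam : Measure (Fin n → ℝ)) [IsProbabilityMeasure lam] (hlam : lam Xᶜ = 0)
    {h : (Fin n → ℝ) → ℝ} (hm : Measurable h) (C : ℝ) (hC : ∀ x ∈ X, |h x| ≤ C) :
    Integrable h lam := by
  refine Integrable.of_bound hm.aestronglyMeasurable C ?_
  have : ∀ᵐ x ∂lam, x ∈ X := by
    rw [ae_iff]; exact hlam
  filter_upwards [this] with x hx using hC x hx

lemma integ_poly {n : ℕ} {X : Set (Fin n → ℝ)} (hX : IsCompact X)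
    (lam : Measure (Fin n → ℝ)) [IsProbabilityMeasure lam] (hlam : lam Xᶜ = 0)
    {γ : ℝ}
    (f : (Fin n → ℝ) → ℝ) (hf : Measurable f) (hfY : ∀ x ∈ X, f x ∈ Icc 0 γ)
    (p : MvPolynomial (Fin n) ℝ) (k : ℕ) :
    Integrable (fun x => MvPolynomial.eval x p * f x ^ k) lam := by
  obtain ⟨C, hC⟩ := hX.exists_bound_of_continuousOn (cont_eval p).continuousOn
  refine integ_of_bdd lam hlam ((cont_eval p).measurable.mul (hf.pow_const k)) (C * γ ^ k) ?_
  intro x hx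
  obtain ⟨h0, h1⟩ := hfY x hx
  rw [abs_mul, abs_pow, abs_of_nonneg h0]
  have := hC x hx
  rw [Real.norm_eq_abs] at this
  have h2 := abs_nonneg (MvPolynomial.eval x p)
  gcongr
  exact h2.trans this

lemma cs_of {P : Type*} [CommRing P] [Algebra ℝ P] (L : P →ₗ[ℝ] ℝ) (h1 : ∀ p, 0 ≤ L (p * p))
    (a b : P) : L (a * b) ^ 2 ≤ L (a * a) * L (b * b) := by
  have h : ∀ t : ℝ, 0 ≤ L (a * a) * (t * t) + (2 * L (a * b)) * t + L (b * b) := by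
    intro t
    have := h1 (t • a + b)
    have e : (t • a + b) * (t • a + b) = (t * t) • (a * a) + (2 * t) • (a * b) + b * b := by
      simp only [Algebra.smul_def, map_mul, map_ofNat]; ring
    rw [e] at this
    simp only [map_add, map_smul, smul_eq_mul] at this
    linarith
  have := discrim_le_zero h
  unfold discrim at this
  nlinarith

section A
variable {n : ℕ} {X : Set (Fin n → ℝ)} (hX : IsCompact X)
    (lam : Measure (Fin n → ℝ)) [IsProbabilityMeasure lam] (hlam : lam Xᶜ = 0)
    {P : Type*} [CommRing P] [Algebra ℝ P] (L : P →ₗ[ℝ] ℝ)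
    (ι : MvPolynomial (Fin n) ℝ →ₐ[ℝ] P)
    (h1 : ∀ p, 0 ≤ L (p * p))
    (m0 : ∀ u, L (ι u) = ∫ x, MvPolynomial.eval x u ∂lam)

include hX hlam h1 m0 in
lemma pos_ext (b : P) (hb : ∀ p, 0 ≤ L (ι (p * p) * b)) (w : MvPolynomial (Fin n) ℝ)
    (hw : ∀ x ∈ X, 0 ≤ MvPolynomial.eval x w) : 0 ≤ L (ι w * b) := by
  by_contra hneg
  push Not at hneg
  -- small δ
  obtain ⟨δ, hδ, hδ2⟩ : ∃ δ : ℝ, 0 < δ ∧ δ ^ 2 * L (b * b) < L (ι w * b) ^ 2 := by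
    have hB := h1 b
    have hW : 0 < L (ι w * b) ^ 2 := by nlinarith
    refine ⟨√(L (ι w * b) ^ 2 / (L (b * b) + 1)), by positivity, ?_⟩
    rw [Real.sq_sqrt (by positivity), div_mul_eq_mul_div, div_lt_iff₀ (by positivity)]
    nlinarith
  -- polynomial p with |p^2 - w| ≤ δ
  obtain ⟨p, hp⟩ : ∃ p : MvPolynomial (Fin n) ℝ, ∀ x ∈ X,
      |MvPolynomial.eval x (p * p - w)| ≤ δ := by
    obtain ⟨C, hC⟩ := hX.exists_bound_of_continuousOn (cont_eval w).continuousOn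
    have hs : Continuous fun x => √(MvPolynomial.eval x w) := (cont_eval w).sqrt
    obtain ⟨C, hC⟩ := hX.exists_bound_of_continuousOn hs.continuousOn
    obtain ⟨p, hp⟩ := sw_approx hX _ hs (ε := min 1 (δ / (2 * |C| + 1))) (by positivity)
    refine ⟨p, fun x hx => ?_⟩
    have h := hp x hx
    have hc := hC x hx
    rw [Real.norm_eq_abs] at hc
    have hsq := Real.mul_self_sqrt (hw x hx)
    set s := √(MvPolynomial.eval x w)
    have e : MvPolynomial.eval x (p * p - w) = (MvPolynomial.eval x p - s) * ((MvPolynomial.eval x p - s) + 2 * s) := by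
      rw [map_sub, map_mul, ← hsq]; ring
    rw [e, abs_mul]
    have h3 := h.trans_le (min_le_left _ _)
    have h4 := h.trans_le (min_le_right _ _)
    have h5 : |(MvPolynomial.eval x p - s) + 2 * s| ≤ 2 * |C| + 1 := by
      refine (abs_add_le _ _).trans ?_
      rw [abs_mul, abs_two]
      linarith [le_abs_self C]
    calc _ ≤ (δ / (2 * |C| + 1)) * (2 * |C| + 1) := by gcongr
      _ = δ := by field_simp
  have hcs := cs_of L h1 (ι (p * p - w)) b
  have hsmall : L (ι (p * p - w) * ι (p * p - w)) ≤ δ ^ 2 := by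
    rw [← map_mul, m0]
    have : ∀ᵐ x ∂lam, x ∈ X := by
      rw [ae_iff]; exact hlam
    calc _ ≤ ∫ x, δ ^ 2 ∂lam := by
          refine integral_mono_of_nonneg ?_ (integrable_const _) ?_
          · exact Filter.Eventually.of_forall fun x => by
              simp only [map_mul]; exact mul_self_nonneg _
          · filter_upwards [this] with x hx
            simp only [map_mul]
            rw [← abs_mul_abs_self, ← sq]
            have := hp x hx
            gcongr
      _ = δ ^ 2 := by simp
  have hB := h1 b
  have h6 := hb p
  have h7 : L (ι (p * p - w) * b) = L (ι (p * p) * b) - L (ι w * b) := by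
    rw [map_sub, sub_mul, map_sub]
  have h8 : L (ι (p * p - w) * b) ^ 2 < L (ι w * b) ^ 2 :=
    (hcs.trans (mul_le_mul_of_nonneg_right hsmall hB)).trans_lt hδ2
  rw [h7] at h8
  nlinarith

variable (y : P) (hy : ∀ p, 0 ≤ L (y * (p * p)))
include hX hlam h1 m0 hy in
lemma pos_R (q : MvPolynomial (Fin n) ℝ) (hq : ∀ x ∈ X, 0 ≤ MvPolynomial.eval x q) (k : ℕ) :
    ∀ (w : MvPolynomial (Fin n) ℝ) (_ : ∀ x ∈ X, 0 ≤ MvPolynomial.eval x w) (j : ℕ),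
    0 ≤ L (ι w * (y ^ j * (y ^ (k+1) - ι q ^ (k+1) - (k+1 : ℕ) * ι q ^ k * (y - ι q)))) := by
  induction k with
  | zero => intro w _ j; simp
  | succ k ih =>
    intro w hw j
    have e : ι w * (y ^ j * (y ^ (k+1+1) - ι q ^ (k+1+1) - (k+1+1 : ℕ) * ι q ^ (k+1) * (y - ι q)))
      = ι w * (y ^ (j+1) * (y ^ (k+1) - ι q ^ (k+1) - (k+1 : ℕ) * ι q ^ k * (y - ι q)))
        + ((k+1 : ℕ) : ℝ) • (ι (w * q ^ k) * (y ^ j * (y - ι q) ^ 2)) := by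
      simp only [Algebra.smul_def, map_mul, map_natCast, map_pow]
      push_cast
      ring
    rw [e, map_add, map_smul, smul_eq_mul]
    have h2 := ih w hw (j+1)
    have h3 : 0 ≤ L (ι (w * q ^ k) * (y ^ j * (y - ι q) ^ 2)) := by
      refine pos_ext hX lam hlam L ι h1 m0 _ ?_ _ ?_
      · intro p
        rcases Nat.even_or_odd' j with ⟨i, rfl | rfl⟩
        · convert h1 (ι p * y ^ i * (y - ι q)) using 2
          rw [map_mul]; ring
        · convert hy (ι p * y ^ i * (y - ι q)) using 2
          rw [map_mul]; ring
      · intro x hx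
        rw [map_mul, map_pow]
        exact mul_nonneg (hw x hx) (pow_nonneg (hq x hx) _)
    positivity

variable {γ : ℝ} (hγ : 0 < γ)
    (f : (Fin n → ℝ) → ℝ) (hf : Measurable f) (hfY : ∀ x ∈ X, f x ∈ Icc 0 γ)
    (m1 : ∀ u, L (ι u * y) = ∫ x, MvPolynomial.eval x u * f x ∂lam)

include hX hlam hγ hf hfY in
lemma approx_f {ε : ℝ} (hε : 0 < ε) : ∃ q : MvPolynomial (Fin n) ℝ,
    (∀ x ∈ X, 0 ≤ MvPolynomial.eval x q ∧ MvPolynomial.eval x q ≤ γ + 1) ∧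
    ∫ x, |f x - MvPolynomial.eval x q| ∂lam ≤ ε := by
  have hae : ∀ᵐ x ∂lam, x ∈ X := by
    rw [ae_iff]; exact hlam
  have hfi : Integrable f lam := by
    refine integ_of_bdd lam hlam hf γ fun x hx => ?_
    obtain ⟨h0, h1⟩ := hfY x hx
    rwa [abs_of_nonneg h0]
  obtain ⟨g, hg, hgi⟩ := hfi.exists_boundedContinuous_integral_sub_le (half_pos hε)
  set δ := min (ε / 4) (1 / 2) with hδ
  have hδ0 : 0 < δ := by positivity
  let c : (Fin n → ℝ) → ℝ := fun x => max 0 (min γ (g x)) + δ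
  have hc : Continuous c := by
    have := g.continuous
    fun_prop
  obtain ⟨q, hq⟩ := sw_approx hX c hc hδ0
  have hd1 : δ ≤ ε / 4 := min_le_left _ _
  have hd2 : δ ≤ 1 / 2 := min_le_right _ _
  refine ⟨q, fun x hx => ?_, ?_⟩
  · have := abs_lt.mp (hq x hx)
    have h1 : 0 ≤ max 0 (min γ (g x)) := le_max_left _ _
    have h2 : max 0 (min γ (g x)) ≤ γ := max_le hγ.le (min_le_left _ _)
    simp only [c] at this
    constructor <;> linarith
  · have hi : Integrable (fun x => ‖f x - g x‖ + ε / 2) lam :=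
      ((hfi.sub hgi).norm).add (integrable_const _)
    calc _ ≤ ∫ x, (‖f x - g x‖ + ε / 2) ∂lam := by
          refine integral_mono_of_nonneg (Filter.Eventually.of_forall fun x => abs_nonneg _) hi ?_
          filter_upwards [hae] with x hx
          have h1 := abs_lt.mp (hq x hx)
          obtain ⟨h2, h3⟩ := hfY x hx
          have h4 : |f x - max 0 (min γ (g x))| ≤ |f x - g x| := by
            rcases max_cases 0 (min γ (g x)) with ⟨e, _⟩ | ⟨e, _⟩ <;> rw [e] <;>
            rcases min_cases γ (g x) with ⟨e, _⟩ | ⟨e, _⟩ <;> (try rw [e]) <;>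
            rcases abs_cases (f x - g x) with ⟨e', _⟩ | ⟨e', _⟩ <;> rw [e', abs_le] <;> constructor <;> linarith
          rw [Real.norm_eq_abs, abs_le]
          have h5 := abs_le.mp h4
          simp only [c] at h1
          constructor <;> linarith
      _ ≤ ε := by
          have h0 : Integrable (fun x => ‖f x - g x‖) lam := (hfi.sub hgi).norm
          rw [integral_add h0 (integrable_const _)]
          simp only [integral_const, probReal_univ, one_smul]
          linarith

include hX hlam h1 m0 hy hγ hf hfY m1 in
lemma lower_bd (w : MvPolynomial (Fin n) ℝ)
    (hw : ∀ x ∈ X, 0 ≤ MvPolynomial.eval x w) (k : ℕ) :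
    ∫ x, MvPolynomial.eval x w * f x ^ (k+1) ∂lam ≤ L (ι w * y ^ (k+1)) := by
  have hae : ∀ᵐ x ∂lam, x ∈ X := by
    rw [ae_iff]; exact hlam
  obtain ⟨C, hC⟩ := hX.exists_bound_of_continuousOn (cont_eval w).continuousOn
  have hInt := integ_poly hX lam hlam f hf hfY
  have hInt0 : ∀ u : MvPolynomial (Fin n) ℝ, Integrable (fun x => MvPolynomial.eval x u) lam :=
    fun u => by simpa using hInt u 0
  have hInt1 : ∀ u : MvPolynomial (Fin n) ℝ, Integrable (fun x => MvPolynomial.eval x u * f x) lam :=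
    fun u => by simpa using hInt u 1
  set K : ℝ := |C| * (2 * (k+1) * (γ+1)^k) with hK
  have hK0 : 0 ≤ K := by positivity
  refine le_of_forall_pos_le_add fun ε hε => ?_
  obtain ⟨q, hq, hqf⟩ := approx_f hX lam hlam hγ f hf hfY (ε := ε / (K + 1)) (by positivity)
  have hR := pos_R hX lam hlam L ι h1 m0 y hy q (fun x hx => (hq x hx).1) k w hw 0
  have e : ι w * (y ^ 0 * (y ^ (k+1) - ι q ^ (k+1) - (k+1 : ℕ) * ι q ^ k * (y - ι q)))
     = ι w * y ^ (k+1) - ι (w * q ^ (k+1) - (k+1 : ℕ) * w * q ^ (k+1)) 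
       - ι ((k+1 : ℕ) * w * q ^ k) * y := by
    simp only [map_sub, map_mul, map_pow, map_natCast]; ring
  rw [e, map_sub, map_sub, m0, m1] at hR
  have key : ∫ x, MvPolynomial.eval x w * f x ^ (k+1) ∂lam ≤
     ∫ x, (MvPolynomial.eval x (w * q ^ (k+1) - (k+1 : ℕ) * w * q ^ (k+1)) +
       MvPolynomial.eval x ((k+1 : ℕ) * w * q ^ k) * f x + K * |f x - MvPolynomial.eval x q|) ∂lam := by
    refine integral_mono_ae (hInt _ _) (((hInt0 _).add (hInt1 _)).add ?_) ?_
    · refine Integrable.const_mul ?_ _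
      refine Integrable.abs (Integrable.sub ?_ (hInt0 q))
      simpa using hInt1 1
    · filter_upwards [hae] with x hx
      obtain ⟨hf0, hf1⟩ := hfY x hx
      obtain ⟨hq0, hq1⟩ := hq x hx
      have hw0 := hw x hx
      have hwC : MvPolynomial.eval x w ≤ |C| := by
        have := hC x hx
        exact (le_abs_self _).trans (this.trans (le_abs_self _))
      simp only [map_sub, map_mul, map_pow, map_natCast]
      set Q := MvPolynomial.eval x q
      set W := MvPolynomial.eval x w
      have h2 := abs_pow_sub_pow_le (a := f x) (b := Q) (n := k+1)
      have h3 : max |f x| |Q| ≤ γ + 1 := by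
        rw [abs_of_nonneg hf0, abs_of_nonneg hq0]; exact max_le (by linarith) hq1
      have h4 : |f x ^ (k+1) - Q ^ (k+1)| ≤ |f x - Q| * (k+1 : ℕ) * (γ+1)^k := by
        refine h2.trans ?_
        rw [Nat.add_sub_cancel]
        gcongr
      have h5 : |Q ^ k * (f x - Q)| ≤ (γ+1)^k * |f x - Q| := by
        rw [abs_mul, abs_pow, abs_of_nonneg hq0]
        gcongr
      have h6 : f x ^ (k+1) - Q ^ (k+1) - (k+1 : ℕ) * (Q ^ k * (f x - Q)) ≤ 
          (2 * (k+1) * (γ+1)^k) * |f x - Q| := by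
        have a1 := (abs_le.mp h4).2
        have a2 := (abs_le.mp h5).1
        have a3 := mul_le_mul_of_nonneg_left a2 (Nat.cast_nonneg (α := ℝ) (k+1))
        push_cast at a1 a3 ⊢
        linarith
      have h7 : W * (f x ^ (k+1) - Q ^ (k+1) - (k+1 : ℕ) * (Q ^ k * (f x - Q))) ≤ K * |f x - Q| := by
        refine (mul_le_mul_of_nonneg_left h6 hw0).trans ?_
        rw [hK, mul_assoc |C|]
        have : 0 ≤ γ := hγ.le
        exact mul_le_mul_of_nonneg_right hwC (by positivity)
      have h8 : W * (f x ^ (k+1) - Q ^ (k+1) - (k+1 : ℕ) * (Q ^ k * (f x - Q))) = 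
        W * f x ^ (k+1) - (W * Q ^ (k+1) - (k+1 : ℕ) * W * Q ^ (k+1)) - (k+1 : ℕ) * W * Q ^ k * f x := by
        ring
      linarith
  have hI3 : Integrable (fun x => MvPolynomial.eval x (w * q ^ (k+1) - ((k+1 : ℕ) : MvPolynomial (Fin n) ℝ) * w * q ^ (k+1)) +
       MvPolynomial.eval x (((k+1 : ℕ) : MvPolynomial (Fin n) ℝ) * w * q ^ k) * f x) lam := (hInt0 _).add (hInt1 _)
  rw [integral_add hI3, integral_add (hInt0 _) (hInt1 _), integral_const_mul] at key
  · have : K * ∫ x, |f x - MvPolynomial.eval x q| ∂lam ≤ ε := by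
      calc _ ≤ K * (ε / (K+1)) := by gcongr
        _ ≤ ε := by
          rw [mul_div_assoc', div_le_iff₀ (by positivity)]
          nlinarith
    linarith
  · refine Integrable.const_mul ?_ _
    refine Integrable.abs (Integrable.sub ?_ (hInt0 q))
    simpa using hInt1 1
end A
lemma mem_idx {n r : ℕ} {d : (Fin n → ℕ) × ℕ} : d ∈ idx n r ↔ (∑ i, d.1 i) + d.2 ≤ r := by
  simp only [idx, Finset.mem_filter, Finset.mem_product, Fintype.mem_piFinset, Finset.mem_range,
    and_iff_right_iff_imp]
  intro h
  refine ⟨fun i => ?_, by omega⟩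
  have := Finset.single_le_sum (f := d.1) (fun i _ => Nat.zero_le _) (Finset.mem_univ i)
  omega

lemma psd_quad {n s : ℕ} {M : Matrix (idx n s) (idx n s) ℝ} (hM : M.PosSemidef)
    (F : ((Fin n → ℕ) × ℕ) → ((Fin n → ℕ) × ℕ) → ℝ) (hF : ∀ a b, M a b = F a.1 b.1)
    (S : Finset ((Fin n → ℕ) × ℕ)) (hS : S ⊆ idx n s) (c : ((Fin n → ℕ) × ℕ) → ℝ) :
    0 ≤ ∑ a ∈ S, ∑ b ∈ S, c a * c b * F a b := by
  have h := (hM.submatrix (fun a : S => (⟨a.1, hS a.2⟩ : idx n s))).dotProduct_mulVec_nonneg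
    (fun a => c a.1)
  simp only [dotProduct, Matrix.mulVec, Matrix.submatrix_apply, hF, Pi.star_apply, star_trivial] at h
  rw [Finset.sum_coe_sort S (fun a => c a * ∑ b : S, F a b.1 * c b.1)] at h
  refine h.trans_eq (Finset.sum_congr rfl fun a _ => ?_)
  rw [Finset.sum_coe_sort S (fun b => F a b * c b), Finset.mul_sum]
  exact Finset.sum_congr rfl fun b _ => by ring

lemma psd_two {ι : Type*} {M : Matrix ι ι ℝ} (hM : M.PosSemidef) (a b : ι) :
    M a b * M b a ≤ M a a * M b b := by
  have h := (hM.submatrix ![a, b]).det_nonneg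
  rw [Matrix.det_fin_two] at h
  simpa using h

lemma exists_split {n : ℕ} (s : Fin n → ℕ) (k : ℕ) (hk : k ≤ ∑ i, s i) :
    ∃ a b : Fin n → ℕ, (∀ i, a i + b i = s i) ∧ ∑ i, a i = k := by
  induction k with
  | zero => exact ⟨0, s, by simp, by simp⟩
  | succ k ih =>
    obtain ⟨a, b, hab, ha⟩ := ih (by omega)
    obtain ⟨i, hi⟩ : ∃ i, 0 < b i := by
      by_contra hcon
      push Not at hcon
      have : ∑ i, s i = ∑ i, a i := Finset.sum_congr rfl fun i _ => by
        have := hab i; have := hcon i; omega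
      omega
    refine ⟨a + Pi.single i 1, b - Pi.single i 1, fun j => ?_, ?_⟩
    · have := hab j
      by_cases h : j = i
      · subst h; simp; omega
      · simp [h, this]
    · simp [Finset.sum_add_distrib, ha]

lemma feas_bound {n m : ℕ} {γ : ℝ} (hγ : 0 < γ) {g : Fin m → (Fin n → ℕ) → ℝ} {t : Fin m → ℕ}
    {μmom : ((Fin n → ℕ) × ℕ) → ℝ} {r : ℕ} {φ : ((Fin n → ℕ) × ℕ) → ℝ}
    (hφ : Feasible n m γ g t μmom r φ) (hμ : ∀ α, μmom (α, 0) ≤ 1)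
    (d : (Fin n → ℕ) × ℕ) (hd : d ∈ idx n (2 * r)) : |φ d| ≤ γ ^ d.2 := by
  obtain ⟨hM, -, hY, hD⟩ := hφ
  have diag : ∀ a ∈ idx n r, 0 ≤ φ (a + a) := fun a ha => hM.diag_nonneg (i := ⟨a, ha⟩)
  have two : ∀ a ∈ idx n r, ∀ b ∈ idx n r, φ (a + b) ^ 2 ≤ φ (a + a) * φ (b + b) := by
    intro a ha b hb
    have h := psd_two hM ⟨a, ha⟩ ⟨b, hb⟩
    change φ (a + b) * φ (b + a) ≤ φ (a + a) * φ (b + b) at h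
    rw [add_comm b a] at h
    rwa [sq]
  have main : ∀ (k : ℕ) (α : Fin n → ℕ), (α, k) ∈ idx n r →
      φ ((α, k) + (α, k)) ≤ γ ^ (2 * k) := by
    intro k
    induction k with
    | zero =>
      intro α ha
      rw [mem_idx] at ha
      rw [hD _ (by simp) (by simp [Finset.sum_add_distrib] at ha ⊢; omega)]
      simpa using hμ (α + α)
    | succ k ih =>
      intro α ha
      have ha' := mem_idx.mp ha
      simp only at ha'
      have hb : (α, k) ∈ idx n r := mem_idx.mpr (by simp only; omega)
      have hc : (α, k) ∈ idx n (r - 1) := mem_idx.mpr (by simp only; omega)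
      have hB := ih α hb
      have h2 := two _ ha _ hb
      have hA0 := diag _ ha
      have hC0 := diag _ hb
      have h3 := hY.diag_nonneg (i := ⟨_, hc⟩)
      have e1 : ((α, k+1) + (α, k+1) : (Fin n → ℕ) × ℕ) = (fun i => α i + α i, k + k + 2) := by
        ext <;> simp; omega
      have e2 : ((α, k+1) + (α, k) : (Fin n → ℕ) × ℕ) = (fun i => α i + α i, k + k + 1) := by
        ext <;> simp; omega
      simp only [locMatY] at h3
      rw [← e1, ← e2] at h3
      set A := φ ((α, k+1) + (α, k+1))
      set B := φ ((α, k+1) + (α, k))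
      set C := φ ((α, k) + (α, k))
      have h4 : A ≤ γ ^ 2 * C := by
        by_contra hcon
        push Not at hcon
        have hA : 0 < A := lt_of_le_of_lt (by positivity) hcon
        have : A * A ≤ A * (γ ^ 2 * C) := by
          calc A * A ≤ (γ * B) * (γ * B) := mul_self_le_mul_self hA0 (by linarith)
            _ = γ ^ 2 * B ^ 2 := by ring
            _ ≤ γ ^ 2 * (A * C) := by gcongr
            _ = _ := by ring
        have := le_of_mul_le_mul_left this hA
        linarith
      calc A ≤ γ ^ 2 * C := h4
        _ ≤ γ ^ 2 * γ ^ (2 * k) := by gcongr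
        _ = _ := by ring
  obtain ⟨α, k⟩ := d
  rw [mem_idx] at hd
  simp only at hd ⊢
  obtain ⟨a, b, hab, hs⟩ := exists_split α (min (∑ i, α i) (r - min k r)) (min_le_left _ _)
  have hsum : ∑ i, a i + ∑ i, b i = ∑ i, α i := by
    rw [← Finset.sum_add_distrib]; exact Finset.sum_congr rfl fun i _ => hab i
  have ha : (a, min k r) ∈ idx n r := mem_idx.mpr (by simp only; omega)
  have hb : (b, k - min k r) ∈ idx n r := mem_idx.mpr (by simp only; omega)
  have e : ((α, k) : (Fin n → ℕ) × ℕ) = (a, min k r) + (b, k - min k r) := by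
    ext i
    · simp [hab]
    · simp
  rw [e]
  have h := two _ ha _ hb
  refine abs_le_of_sq_le_sq (h.trans ?_) (by positivity)
  calc _ ≤ γ ^ (2 * min k r) * γ ^ (2 * (k - min k r)) :=
        mul_le_mul (main _ _ ha) (main _ _ hb) (diag _ hb) (by positivity)
    _ = (γ ^ k) ^ 2 := by
        rw [← pow_add, ← pow_mul]; congr 1; omega

/-- Embedding of exponents. -/
def expEmb (n : ℕ) : (Fin n →₀ ℕ) →+ ((Fin n → ℕ) × ℕ) where
  toFun e := (fun i => e i, 0)
  map_zero' := rfl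
  map_add' _ _ := rfl

def iotaHom (n : ℕ) : MvPolynomial (Fin n) ℝ →ₐ[ℝ] AddMonoidAlgebra ℝ ((Fin n → ℕ) × ℕ) :=
  AddMonoidAlgebra.mapDomainAlgHom ℝ ℝ (expEmb n)

lemma iota_monomial {n : ℕ} (e : Fin n →₀ ℕ) (c : ℝ) :
    iotaHom n (MvPolynomial.monomial e c) = AddMonoidAlgebra.single (fun i => e i, 0) c := by
  unfold iotaHom
  exact AddMonoidAlgebra.mapDomain_single

def Lfun {n : ℕ} (l : ((Fin n → ℕ) × ℕ) → ℝ) :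
    AddMonoidAlgebra ℝ ((Fin n → ℕ) × ℕ) →ₗ[ℝ] ℝ :=
  (Finsupp.linearCombination ℝ l) ∘ₗ (AddMonoidAlgebra.coeffLinearEquiv ℝ).toLinearMap

lemma Lfun_single {n : ℕ} (l : ((Fin n → ℕ) × ℕ) → ℝ) (d) (c : ℝ) :
    Lfun l (AddMonoidAlgebra.single d c) = c * l d := by
  simp [Lfun]

lemma Lfun_quad {n : ℕ} (l : ((Fin n → ℕ) × ℕ) → ℝ) (d : (Fin n → ℕ) × ℕ)
    (p : AddMonoidAlgebra ℝ ((Fin n → ℕ) × ℕ)) :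
    Lfun l (AddMonoidAlgebra.single d 1 * (p * p)) =
      ∑ a ∈ p.coeff.support, ∑ b ∈ p.coeff.support, p.coeff a * p.coeff b * l (a + b + d) := by
  have hp := AddMonoidAlgebra.sum_coeff_single p
  rw [Finsupp.sum] at hp
  conv_lhs => rw [← hp, Finset.sum_mul_sum, Finset.mul_sum, map_sum]
  refine Finset.sum_congr rfl fun a _ => ?_
  rw [Finset.mul_sum, map_sum]
  refine Finset.sum_congr rfl fun b _ => ?_
  rw [AddMonoidAlgebra.single_mul_single, AddMonoidAlgebra.single_mul_single, Lfun_single, one_mul,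
    add_comm d]
/-- monomial function -/
def mon {n : ℕ} (f : (Fin n → ℝ) → ℝ) (d : (Fin n → ℕ) × ℕ) (x : Fin n → ℝ) : ℝ :=
  (∏ i, x i ^ d.1 i) * f x ^ d.2

lemma mon_add {n : ℕ} (f : (Fin n → ℝ) → ℝ) (a b : (Fin n → ℕ) × ℕ) (x : Fin n → ℝ) :
    mon f (a + b) x = mon f a x * mon f b x := by
  simp only [mon, Prod.fst_add, Prod.snd_add, Pi.add_apply, pow_add, Finset.prod_mul_distrib]
  ring

lemma mon_meas {n : ℕ} {f : (Fin n → ℝ) → ℝ} (hf : Measurable f) (d : (Fin n → ℕ) × ℕ) :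
    Measurable (mon f d) := by
  unfold mon
  fun_prop

section C
variable {n : ℕ} {X : Set (Fin n → ℝ)} (hXsub : X ⊆ Icc 0 1) (hX : IsCompact X)
    (lam : Measure (Fin n → ℝ)) [IsProbabilityMeasure lam] (hlam : lam Xᶜ = 0)
    {γ : ℝ} (f : (Fin n → ℝ) → ℝ) (hf : Measurable f) (hfY : ∀ x ∈ X, f x ∈ Icc 0 γ)

include hXsub hfY in
lemma mon_bd (d : (Fin n → ℕ) × ℕ) (x) (hx : x ∈ X) : 0 ≤ mon f d x ∧ mon f d x ≤ γ ^ d.2 := by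
  obtain ⟨h0, h1⟩ := hXsub hx
  obtain ⟨h2, h3⟩ := hfY x hx
  have h4 : 0 ≤ ∏ i, x i ^ d.1 i := Finset.prod_nonneg fun i _ => pow_nonneg (h0 i) _
  have h5 : ∏ i, x i ^ d.1 i ≤ 1 :=
    Finset.prod_le_one (fun i _ => pow_nonneg (h0 i) _) fun i _ => pow_le_one₀ (h0 i) (h1 i)
  refine ⟨mul_nonneg h4 (pow_nonneg h2 _), ?_⟩
  calc _ ≤ 1 * γ ^ d.2 := by unfold mon; gcongr
    _ = _ := one_mul _

include hXsub hlam hf hfY in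
lemma mon_int (d : (Fin n → ℕ) × ℕ) : Integrable (mon f d) lam :=
  integ_of_bdd lam hlam (mon_meas hf d) (γ ^ d.2) fun x hx => by
    obtain ⟨h0, h1⟩ := mon_bd hXsub f hfY d x hx
    rwa [abs_of_nonneg h0]

include hlam in
lemma psd_int {s : ℕ} (M : Matrix (idx n s) (idx n s) ℝ) (w : (Fin n → ℝ) → ℝ)
    (hw : ∀ x ∈ X, 0 ≤ w x) (hM : ∀ a b, M a b = ∫ x, w x * (mon f a.1 x * mon f b.1 x) ∂lam)
    (hi : ∀ a b : idx n s, Integrable (fun x => w x * (mon f a.1 x * mon f b.1 x)) lam) :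
    M.PosSemidef := by
  have hae : ∀ᵐ x ∂lam, x ∈ X := by
    rw [ae_iff]; exact hlam
  refine Matrix.PosSemidef.of_dotProduct_mulVec_nonneg ?_ fun v => ?_
  · ext a b
    simp only [Matrix.conjTranspose_apply, star_trivial, hM]
    congr 1; ext x; ring
  · have e : star v ⬝ᵥ M.mulVec v = ∫ x, w x * (∑ a, v a * mon f a.1 x) ^ 2 ∂lam := by
      have e2 : ∀ x, w x * (∑ a, v a * mon f a.1 x) ^ 2 =
          ∑ a, ∑ b, v a * v b * (w x * (mon f a.1 x * mon f b.1 x)) := by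
        intro x
        rw [sq, Finset.sum_mul_sum, Finset.mul_sum]
        refine Finset.sum_congr rfl fun a _ => ?_
        rw [Finset.mul_sum]
        exact Finset.sum_congr rfl fun b _ => by ring
      simp only [e2]
      rw [integral_finsetSum _ fun a _ => integrable_finsetSum _ fun b _ => (hi a b).const_mul _]
      simp only [dotProduct, Matrix.mulVec, Pi.star_apply, star_trivial]
      refine Finset.sum_congr rfl fun a _ => ?_
      rw [integral_finsetSum _ fun b _ => (hi a b).const_mul _, Finset.mul_sum]
      refine Finset.sum_congr rfl fun b _ => ?_
      rw [integral_const_mul, hM]; ring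
    rw [e]
    refine integral_nonneg_of_ae ?_
    filter_upwards [hae] with x hx
    exact mul_nonneg (hw x hx) (sq_nonneg _)

include hXsub hlam hf hfY in
lemma mu_feas {m : ℕ} (g : Fin m → (Fin n → ℕ) → ℝ) (t : Fin m → ℕ)
    (hXdef : X = {x | ∀ j, 0 ≤ polyEval n (2 * t j) (g j) x})
    (μmom : ((Fin n → ℕ) × ℕ) → ℝ)
    (hμ : ∀ d, μmom d = ∫ x, mon f d x ∂lam) (r : ℕ) :
    Feasible n m γ g t μmom r μmom := by
  have hI := mon_int hXsub lam hlam f hf hfY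
  refine ⟨?_, fun j => ?_, ?_, fun _ _ _ => rfl⟩
  · refine psd_int (X := X) lam hlam f _ (fun _ => 1) (fun _ _ => zero_le_one) (fun a b => ?_)
      (fun a b => ?_)
    · change μmom (a.1 + b.1) = _
      simp only [hμ, mon_add, one_mul]
    · simpa only [one_mul, ← mon_add] using hI _
  · have e : ∀ (a b : idx n (r - t j)) (x), polyEval n (2 * t j) (g j) x * (mon f a.1 x * mon f b.1 x) =
        ∑ e ∈ xIdx n (2 * t j), g j e * mon f (fun i => e i + a.1.1 i + b.1.1 i, a.1.2 + b.1.2) x := by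
      intro a b x
      rw [polyEval, Finset.sum_mul]
      refine Finset.sum_congr rfl fun e _ => ?_
      simp only [mon, pow_add, Finset.prod_mul_distrib]
      ring
    refine psd_int (X := X) lam hlam f _ (polyEval n (2 * t j) (g j)) ?_ (fun a b => ?_)
      (fun a b => ?_)
    · intro x hx
      rw [hXdef] at hx
      exact hx j
    · simp only [e]
      rw [integral_finsetSum _ fun e _ => (hI _).const_mul _]
      simp only [locMatX, hμ, integral_const_mul]
    · simp only [e]
      exact integrable_finsetSum _ fun e _ => (hI _).const_mul _
  · have e : ∀ (a b : idx n (r - 1)) (x), (f x * (γ - f x)) * (mon f a.1 x * mon f b.1 x) =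
        γ * mon f (fun i => a.1.1 i + b.1.1 i, a.1.2 + b.1.2 + 1) x -
          mon f (fun i => a.1.1 i + b.1.1 i, a.1.2 + b.1.2 + 2) x := by
      intro a b x
      simp only [mon, pow_add, Finset.prod_mul_distrib]
      ring
    refine psd_int (X := X) lam hlam f _ (fun x => f x * (γ - f x)) ?_ (fun a b => ?_)
      (fun a b => ?_)
    · intro x hx
      obtain ⟨h0, h1⟩ := hfY x hx
      exact mul_nonneg h0 (by linarith)
    · simp only [e]
      rw [integral_sub ((hI _).const_mul _) (hI _), integral_const_mul]
      simp only [locMatY, hμ]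
    · simp only [e]
      exact ((hI _).const_mul _).sub (hI _)

include hXsub hX hlam hf hfY in
/-- Limit functionals dominate the true moments. -/
lemma lim_lower (hγ : 0 < γ) (l : ((Fin n → ℕ) × ℕ) → ℝ)
    (h1 : ∀ (S : Finset ((Fin n → ℕ) × ℕ)) (c : ((Fin n → ℕ) × ℕ) → ℝ),
      0 ≤ ∑ a ∈ S, ∑ b ∈ S, c a * c b * l (a + b))
    (h2 : ∀ (S : Finset ((Fin n → ℕ) × ℕ)) (c : ((Fin n → ℕ) × ℕ) → ℝ),
      0 ≤ ∑ a ∈ S, ∑ b ∈ S, c a * c b * (γ * l (a + b + (0, 1)) - l (a + b + (0, 2))))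
    (hD : ∀ d : (Fin n → ℕ) × ℕ, d.2 ≤ 1 → l d = ∫ x, mon f d x ∂lam)
    (d : (Fin n → ℕ) × ℕ) : ∫ x, mon f d x ∂lam ≤ l d := by
  set y : AddMonoidAlgebra ℝ ((Fin n → ℕ) × ℕ) := AddMonoidAlgebra.single (0, 1) 1 with hy
  have hypow : ∀ k : ℕ, y ^ k = AddMonoidAlgebra.single (0, k) 1 := by
    intro k
    rw [hy, AddMonoidAlgebra.single_pow]
    simp
  have q1 : ∀ p, 0 ≤ Lfun l (p * p) := by
    intro p
    have := Lfun_quad l 0 p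
    rw [← AddMonoidAlgebra.one_def, one_mul] at this
    rw [this]
    simpa using h1 _ _
  have q2 : ∀ p, 0 ≤ Lfun l (y * (p * p)) := by
    intro p
    have a1 : 0 ≤ Lfun l (y ^ 2 * (p * p)) := by
      convert q1 (y * p) using 2; ring
    have a2 := h2 p.coeff.support p.coeff
    simp only [mul_sub, Finset.sum_sub_distrib] at a2
    rw [hypow, Lfun_quad] at a1
    rw [hy, Lfun_quad]
    have a3 : ∑ a ∈ p.coeff.support, ∑ b ∈ p.coeff.support,
        p.coeff a * p.coeff b * (γ * l (a + b + (0, 1))) = γ *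
        ∑ a ∈ p.coeff.support, ∑ b ∈ p.coeff.support,
        p.coeff a * p.coeff b * l (a + b + (0, 1)) := by
      simp only [Finset.mul_sum]
      exact Finset.sum_congr rfl fun a _ => Finset.sum_congr rfl fun b _ => by ring
    rw [a3] at a2
    exact nonneg_of_mul_nonneg_right (by linarith) hγ
  have hInt := integ_poly hX lam hlam f hf hfY
  have mom : ∀ k, k ≤ 1 → ∀ u, Lfun l (iotaHom n u * y ^ k) =
      ∫ x, MvPolynomial.eval x u * f x ^ k ∂lam := by
    intro k hk u
    induction u using MvPolynomial.induction_on' with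
    | monomial e c =>
      rw [iota_monomial, hypow, AddMonoidAlgebra.single_mul_single, Lfun_single, hD _ (by simpa),
        mul_one, ← integral_const_mul]
      congr 1; ext x
      rw [MvPolynomial.eval_monomial, Finsupp.prod_fintype _ _ (by simp)]
      simp [mon, mul_assoc]
    | add p q hp hq =>
      simp only [map_add, add_mul, hp, hq]
      rw [integral_add (hInt p k) (hInt q k)]
  have mono : ∀ (α : Fin n → ℕ) (k : ℕ) x, MvPolynomial.eval x
      (MvPolynomial.monomial (Finsupp.equivFunOnFinite.symm α) (1:ℝ)) * f x ^ k = mon f (α, k) x := by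
    intro α k x
    rw [MvPolynomial.eval_monomial, Finsupp.prod_fintype _ _ (by simp)]
    simp [mon]
  obtain ⟨α, k⟩ := d
  rcases k with _ | k
  · exact (hD _ (by simp)).ge
  · have := lower_bd hX lam hlam (Lfun l) (iotaHom n) q1 (by simpa using mom 0 (by simp)) y q2 hγ f hf hfY
      (by simpa using mom 1 le_rfl) (MvPolynomial.monomial (Finsupp.equivFunOnFinite.symm α) 1)
      (fun x hx => by
        have h := mono α 0 x
        rw [pow_zero, mul_one] at h
        rw [h]
        exact (mon_bd hXsub f hfY _ x hx).1) k
    simp only [mono] at this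
    rw [iota_monomial, hypow, AddMonoidAlgebra.single_mul_single, Lfun_single] at this
    simpa using this
end C

open Filter Topology in
/-- For strictly positive weights `θ` with
`Σ_d θ_d max(1,γ)^{d_y+1} < ∞`, if `φ^r` is an optimal solution of the order-`r`
relaxation with weighted objective `Σ_{|d| ≤ 2r} θ_d φ_d` for each admissible `r`, then
the optimal values converge to `𝒯(μ) = Σ_d θ_d μ_d` and `φ^r_d → μ_d` for every
`d ∈ ℕ^n × ℕ`. -/
theorem weighted_sdp_convergence_all_moments
    (n m : ℕ) (hn : 1 ≤ n) (hm : 1 ≤ m)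
    (γ : ℝ) (hγ : 0 < γ)
    (g : Fin m → (Fin n → ℕ) → ℝ) (t : Fin m → ℕ)
    (hgdeg : ∀ j e, 2 * t j < ∑ i, e i → g j e = 0)
    (hg1t : t ⟨0, hm⟩ = 1)
    (hg1 : ∀ x : Fin n → ℝ,
      polyEval n (2 * t ⟨0, hm⟩) (g ⟨0, hm⟩) x = (n : ℝ) - ∑ i, x i ^ 2)
    (X : Set (Fin n → ℝ))
    (hXdef : X = {x | ∀ j, 0 ≤ polyEval n (2 * t j) (g j) x})
    (hXsub : X ⊆ Icc 0 1) (hXc : IsCompact X)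
    (lam : Measure (Fin n → ℝ)) [IsProbabilityMeasure lam] (hlam : lam Xᶜ = 0)
    (f : (Fin n → ℝ) → ℝ) (hf : Measurable f) (hfY : ∀ x ∈ X, f x ∈ Icc 0 γ)
    (μmom : ((Fin n → ℕ) × ℕ) → ℝ)
    (hμmom : ∀ d : (Fin n → ℕ) × ℕ,
      μmom d = ∫ x, (∏ i, x i ^ d.1 i) * f x ^ d.2 ∂lam)
    (θ : ((Fin n → ℕ) × ℕ) → ℝ) (hθ : ∀ d, 0 < θ d)
    (hθsum : Summable fun d : (Fin n → ℕ) × ℕ => θ d * max 1 γ ^ (d.2 + 1))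
    (φseq : ℕ → ((Fin n → ℕ) × ℕ) → ℝ)
    (hopt : ∀ r : ℕ, 1 ≤ r → (∀ j, t j ≤ r) →
      Feasible n m γ g t μmom r (φseq r) ∧
      ∀ φ : ((Fin n → ℕ) × ℕ) → ℝ, Feasible n m γ g t μmom r φ →
        ∑ d ∈ idx n (2 * r), θ d * φseq r d ≤ ∑ d ∈ idx n (2 * r), θ d * φ d) :
    Tendsto (fun r => ∑ d ∈ idx n (2 * r), θ d * φseq r d) atTop
      (𝓝 (∑' d : (Fin n → ℕ) × ℕ, θ d * μmom d)) ∧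
    ∀ d : (Fin n → ℕ) × ℕ, Tendsto (fun r => φseq r d) atTop (𝓝 (μmom d)) := by
  have hμ : ∀ d, μmom d = ∫ x, mon f d x ∂lam := hμmom
  have hae : ∀ᵐ x ∂lam, x ∈ X := by
    rw [ae_iff]; exact hlam
  have hμI := mon_int hXsub lam hlam f hf hfY
  have hμ0 : ∀ d, 0 ≤ μmom d := fun d => by
    rw [hμ]
    refine integral_nonneg_of_ae ?_
    filter_upwards [hae] with x hx using (mon_bd hXsub f hfY d x hx).1
  have hμ1 : ∀ d, μmom d ≤ γ ^ d.2 := fun d => by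
    rw [hμ]
    calc _ ≤ ∫ x, γ ^ d.2 ∂lam := by
          refine integral_mono_ae (hμI d) (integrable_const _) ?_
          filter_upwards [hae] with x hx using (mon_bd hXsub f hfY d x hx).2
      _ = _ := by simp
  have hγp : ∀ k : ℕ, γ ^ k ≤ max 1 γ ^ (k + 1) := fun k => by
    calc γ ^ k ≤ max 1 γ ^ k := pow_le_pow_left₀ hγ.le (le_max_right _ _) k
      _ ≤ _ := pow_le_pow_right₀ (le_max_left _ _) (Nat.le_succ k)
  -- eventually admissible
  have hadm : ∀ᶠ r in atTop, 1 ≤ r ∧ ∀ j, t j ≤ r := by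
    filter_upwards [eventually_ge_atTop (1 + ∑ j, t j)] with r hr
    refine ⟨by omega, fun j => ?_⟩
    have := Finset.single_le_sum (f := t) (fun i _ => Nat.zero_le _) (Finset.mem_univ j)
    omega
  have hfeas : ∀ᶠ r in atTop, Feasible n m γ g t μmom r (φseq r) := by
    filter_upwards [hadm] with r hr using (hopt r hr.1 hr.2).1
  have hμα : ∀ α, μmom (α, 0) ≤ 1 := fun α => by simpa using hμ1 (α, 0)
  have hmem : ∀ S : Finset ((Fin n → ℕ) × ℕ), ∀ᶠ r in atTop, S ⊆ idx n r := by
    intro S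
    filter_upwards [eventually_ge_atTop (∑ d ∈ S, ((∑ i, d.1 i) + d.2))] with r hr d hd
    rw [mem_idx]
    exact (Finset.single_le_sum (f := fun d : (Fin n → ℕ) × ℕ => (∑ i, d.1 i) + d.2)
      (fun i _ => Nat.zero_le _) hd).trans hr
  have h2r : Tendsto (fun r : ℕ => 2 * r) atTop atTop :=
    tendsto_id.const_mul_atTop' (by norm_num)
  have hpred : Tendsto (fun r : ℕ => r - 1) atTop atTop := tendsto_sub_atTop_nat 1
  have hmem2 : ∀ d, ∀ᶠ r in atTop, d ∈ idx n (2 * r) := fun d => by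
    filter_upwards [h2r.eventually (hmem {d})] with r hr using hr (Finset.mem_singleton_self d)
  have hbd : ∀ᶠ r in atTop, ∀ d ∈ idx n (2 * r), |φseq r d| ≤ γ ^ d.2 := by
    filter_upwards [hfeas] with r hr d hd using feas_bound hγ hr hμα d hd
  -- lower limit
  have hneg : ∀ d, Tendsto (fun r => max (μmom d - φseq r d) 0) atTop (𝓝 0) := by
    intro d
    rw [tendsto_iff_ultrafilter]
    intro U hU
    have hlim : ∀ e, ∃ l : ℝ, Tendsto (fun r => φseq r e) U (𝓝 l) := by
      intro e
      have hK : IsCompact (Icc (-(γ ^ e.2)) (γ ^ e.2)) := isCompact_Icc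
      obtain ⟨l, -, hl⟩ := hK.ultrafilter_le_nhds (U.map fun r => φseq r e) (by
        rw [le_principal_iff]
        refine hU ?_
        change ∀ᶠ r in atTop, _
        filter_upwards [hbd, hmem2 e] with r h1 h2
        exact abs_le.mp (h1 e h2))
      exact ⟨l, hl⟩
    choose l hl using hlim
    have hlow := lim_lower hXsub hXc lam hlam f hf hfY hγ l ?_ ?_ ?_ d
    · rw [← hμ] at hlow
      have h := ((hl d).const_sub (μmom d)).max (tendsto_const_nhds (x := (0:ℝ)))
      rwa [max_eq_right (by linarith)] at h
    · intro S c
      refine ge_of_tendsto (f := (fun r => ∑ a ∈ S, ∑ b ∈ S, c a * c b * φseq r (a + b)))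
        (x := (U : Filter ℕ)) ?_ ?_
      · exact tendsto_finsetSum _ fun a _ => tendsto_finsetSum _ fun b _ =>
          (hl _).const_mul _
      · refine hU ?_
        filter_upwards [hfeas, hmem S] with r h1 h2
        exact psd_quad h1.1 (fun a b => φseq r (a + b)) (fun _ _ => rfl) S h2 c
    · intro S c
      refine ge_of_tendsto (f := (fun r => ∑ a ∈ S, ∑ b ∈ S, c a * c b *
        (γ * φseq r (a + b + (0, 1)) - φseq r (a + b + (0, 2))))) (x := (U : Filter ℕ)) ?_ ?_
      · exact tendsto_finsetSum _ fun a _ => tendsto_finsetSum _ fun b _ =>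
          (((hl _).const_mul _).sub (hl _)).const_mul _
      · refine hU ?_
        filter_upwards [hfeas, hpred.eventually (hmem S)] with r h1 h2
        exact psd_quad h1.2.2.1 (fun a b => γ * φseq r (a + b + (0, 1)) - φseq r (a + b + (0, 2)))
          (fun _ _ => rfl) S h2 c
    · intro e he
      rw [← hμ]
      refine tendsto_nhds_unique (hl e) ?_
      refine (tendsto_const_nhds (x := μmom e)).congr' ?_
      refine hU ?_
      filter_upwards [hfeas, hmem2 e] with r h1 h2
      exact (h1.2.2.2 e he (mem_idx.mp h2)).symm
  -- dominated convergence for negative parts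
  classical
  set N : ℕ → ((Fin n → ℕ) × ℕ) → ℝ := fun r d =>
    if d ∈ idx n (2 * r) then θ d * max (μmom d - φseq r d) 0 else 0 with hN
  have hN0 : ∀ r d, 0 ≤ N r d := fun r d => by
    simp only [hN]
    split_ifs
    · exact mul_nonneg (hθ d).le (le_max_right _ _)
    · exact le_rfl
  have hNbd : ∀ᶠ r in atTop, ∀ d, ‖N r d‖ ≤ 2 * (θ d * max 1 γ ^ (d.2 + 1)) := by
    filter_upwards [hbd] with r hr d
    rw [Real.norm_eq_abs, abs_of_nonneg (hN0 r d)]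
    have hm := hγp d.2
    have hp : 0 < θ d := hθ d
    simp only [hN]
    split_ifs with h
    · have h1 := abs_le.mp (hr d h)
      have h2 := hμ1 d
      have h3 := pow_pos hγ d.2
      have : max (μmom d - φseq r d) 0 ≤ 2 * max 1 γ ^ (d.2 + 1) := max_le (by linarith) (by linarith)
      calc _ ≤ θ d * (2 * max 1 γ ^ (d.2 + 1)) := by gcongr
        _ = _ := by ring
    · positivity
  have hNt : ∀ d, Tendsto (fun r => N r d) atTop (𝓝 0) := by
    intro d
    have h := (hneg d).const_mul (θ d)
    rw [mul_zero] at h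
    refine h.congr' ?_
    filter_upwards [hmem2 d] with r hr
    simp only [hN, if_pos hr]
  have hNs : Tendsto (fun r => ∑' d, N r d) atTop (𝓝 0) := by
    have := tendsto_tsum_of_dominated_convergence (hθsum.mul_left 2) hNt hNbd
    simpa using this
  have hNs2 : Tendsto (fun r => 2 * ∑' d, N r d) atTop (𝓝 0) := by
    simpa using hNs.const_mul 2
  have habs : ∀ᶠ r in atTop, ∑ d ∈ idx n (2 * r), θ d * |φseq r d - μmom d| ≤ 2 * ∑' d, N r d := by
    filter_upwards [hadm] with r hr
    have h1 := (hopt r hr.1 hr.2).2 μmom (mu_feas hXsub lam hlam f hf hfY g t hXdef μmom hμ r)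
    have h2 : ∑' d, N r d = ∑ d ∈ idx n (2 * r), θ d * max (μmom d - φseq r d) 0 := by
      rw [tsum_eq_sum (s := idx n (2 * r)) (fun d hd => by simp only [hN, if_neg hd])]
      exact Finset.sum_congr rfl fun d hd => by simp only [hN, if_pos hd]
    have h3 : ∑ d ∈ idx n (2 * r), θ d * |φseq r d - μmom d| =
        (∑ d ∈ idx n (2 * r), θ d * φseq r d - ∑ d ∈ idx n (2 * r), θ d * μmom d) +
        2 * ∑ d ∈ idx n (2 * r), θ d * max (μmom d - φseq r d) 0 := by
      rw [← Finset.sum_sub_distrib, Finset.mul_sum, ← Finset.sum_add_distrib]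
      refine Finset.sum_congr rfl fun d _ => ?_
      rcases le_total (μmom d) (φseq r d) with h | h
      · rw [abs_of_nonneg (by linarith), max_eq_right (by linarith)]; ring
      · rw [abs_of_nonpos (by linarith), max_eq_left (by linarith)]; ring
    rw [h3, h2]
    linarith
  constructor
  · have hsum : Summable fun d => θ d * μmom d := by
      refine Summable.of_nonneg_of_le (fun d => mul_nonneg (hθ d).le (hμ0 d)) (fun d => ?_) hθsum
      exact mul_le_mul_of_nonneg_left ((hμ1 d).trans (hγp d.2)) (hθ d).le
    have hidx : Tendsto (fun r => idx n (2 * r)) atTop atTop := by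
      rw [tendsto_atTop]
      intro S
      exact h2r.eventually (hmem S)
    have hT := hsum.hasSum.comp hidx
    have hdiff : Tendsto (fun r => ∑ d ∈ idx n (2 * r), θ d * φseq r d -
        ∑ d ∈ idx n (2 * r), θ d * μmom d) atTop (𝓝 0) := by
      refine squeeze_zero_norm' ?_ hNs2
      filter_upwards [habs] with r hr
      refine le_trans ?_ hr
      rw [← Finset.sum_sub_distrib]
      refine (norm_sum_le _ _).trans_eq (Finset.sum_congr rfl fun d _ => ?_)
      rw [← mul_sub, Real.norm_eq_abs, abs_mul, abs_of_pos (hθ d)]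
    have := hdiff.add hT
    simpa [Function.comp_def] using this
  · intro d
    have h0 : Tendsto (fun r => φseq r d - μmom d) atTop (𝓝 0) := by
      have hz : Tendsto (fun r => (θ d)⁻¹ * (2 * ∑' d, N r d)) atTop (𝓝 0) := by
        simpa using hNs2.const_mul (θ d)⁻¹
      refine squeeze_zero_norm' ?_ hz
      filter_upwards [habs, hmem2 d] with r hr hd
      rw [Real.norm_eq_abs, ← div_eq_inv_mul, le_div_iff₀ (hθ d), mul_comm]
      refine le_trans ?_ hr
      exact Finset.single_le_sum (f := fun d => θ d * |φseq r d - μmom d|)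
        (fun i _ => mul_nonneg (hθ i).le (abs_nonneg _)) hd
    simpa using h0.add_const (μmom d)
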